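/- arXiv:1407.4208 — 3 statements merged into one kernel-verified Lean document; each statement's English description precedes it below -/
import Mathlib

section
/- There exists a constant C > 0 (independent of N and s) such that for all N, s ∈ ℕ one has disc(N,s) ≤ C·√(s/N); equivalently, for every N and s there exists an N-element point set P in [0,1)^s whose star-discrepancy satisfies D*(P) ≤ C·√(s/N). -/
open Finset

/-- Local discrepancy of the point set `x` at the corner point `t`:
`Δ(t) = #{n : x_n ∈ [0,t)}/N − ∏_j t_j`. -/
noncomputable def localDisc {N s : ℕ} (x : Fin N → Fin s → ℝ) (t : Fin s → ℝ) : ℝ :=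
  ((univ.filter fun n => ∀ j, x n j < t j).card : ℝ) / N - ∏ j, t j

/-- Star-discrepancy `D*(x) = sup_{t ∈ [0,1]^s} |Δ(t)|`. -/
noncomputable def starDisc {N s : ℕ} (x : Fin N → Fin s → ℝ) : ℝ :=
  sSup {d : ℝ | ∃ t : Fin s → ℝ, (∀ j, t j ∈ Set.Icc (0:ℝ) 1) ∧ d = |localDisc x t|}

/-- `N`-th minimal star-discrepancy `disc(N,s)`, the infimum of `D*` over all
`N`-element point sets in `[0,1)^s`. -/
noncomputable def minDisc (N s : ℕ) : ℝ :=
  sInf {d : ℝ | ∃ x : Fin N → Fin s → ℝ,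
    (∀ n j, x n j ∈ Set.Ico (0:ℝ) 1) ∧ d = starDisc x}

/-- Inverse of the star-discrepancy: `N(s,ε) = min {N ≥ 1 : disc(N,s) ≤ ε}`. -/
noncomputable def invDisc (s : ℕ) (ε : ℝ) : ℕ :=
  sInf {N : ℕ | 1 ≤ N ∧ minDisc N s ≤ ε}

/-!
The points are drawn independently and uniformly. For corners `u ≤ v` whose boxes differ in volume
by at most `p`, Bernstein's inequality bounds the probability of `|Δ(v) - Δ(u)| ≥ a` by
`2 * exp (-N * a ^ 2 / (4 * p))` whenever `a ≤ 2 * p`, so increments across thin brackets are small.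
A grid of powers of `(1 - δ / 2) ^ (1 / s)` yields `δ`-bracketing covers with at most
`(12 / δ ^ 2) ^ s` points. Chain a point through the covers with `δ = 2⁻ᵏ`, `k ≤ K`, where `2⁻ᴷ` is
the first scale below `√(s / N)`. On level `k` allow increments of order `(3 / 4) ^ k * √(s / N)`:
the Bernstein exponent, of order `s * (9 / 8) ^ k`, dominates the entropy, of order `s * (k + 1)`,
so a union bound over all levels gives a point set without larger increments, and these add up to
`O(√(s / N))`. The final bracket contributes at most `2⁻ᴷ ≤ √(s / N)`.
-/

open MeasureTheory ProbabilityTheory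

lemma sum_pow_le_inv_one_sub {r : ℝ} (hr0 : 0 ≤ r) (hr1 : r < 1) (I : Finset ℕ) :
    ∑ i ∈ I, r ^ i ≤ (1 - r)⁻¹ := by
  rw [← tsum_geometric_of_lt_one hr0 hr1]
  exact (summable_geometric_of_lt_one hr0 hr1).sum_le_tsum _ fun _ _ => by positivity

section BracketingCover

variable {ι : Type*} [Fintype ι]

/-- A `δ`-bracket: corner points `u ≤ v` such that the volumes of the boxes `[0,u)` and `[0,v)`
differ by at most `δ`. -/
structure IsBracket (δ : ℝ) (u v : ι → ℝ) : Prop where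
  le : u ≤ v
  prod_sub_prod_le : ∏ j, v j - ∏ j, u j ≤ δ

/-- A `δ`-bracketing cover of the unit cube `[0,1]^ι`: a finite set of corner points such that every
point of the cube lies in some `δ`-bracket with both ends in the set. -/
structure IsBracketingCover (δ : ℝ) (Γ : Finset (ι → ℝ)) : Prop where
  subset : (Γ : Set (ι → ℝ)) ⊆ Set.Icc 0 1
  exists_isBracket :
    ∀ t ∈ Set.Icc (0 : ι → ℝ) 1, ∃ u ∈ Γ, ∃ v ∈ Γ, IsBracket δ u v ∧ t ∈ Set.Icc u v

lemma prod_mono_of_nonneg {u v : ι → ℝ} (hu : 0 ≤ u) (huv : u ≤ v) : ∏ j, u j ≤ ∏ j, v j :=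
  prod_le_prod (fun j _ => hu j) fun j _ => huv j

lemma IsBracket.mono {δ ε : ℝ} {u v : ι → ℝ} (h : IsBracket δ u v) (hδε : δ ≤ ε) :
    IsBracket ε u v :=
  ⟨h.le, h.prod_sub_prod_le.trans hδε⟩

lemma IsBracket.of_le_right {δ : ℝ} {u v t : ι → ℝ} (h : IsBracket δ u v) (ht : t ∈ Set.Icc u v)
    (h0 : 0 ≤ t) : IsBracket δ u t :=
  ⟨ht.1, (sub_le_sub_right (prod_mono_of_nonneg h0 ht.2) _).trans h.prod_sub_prod_le⟩

lemma isBracketingCover_zero_one [Nonempty ι] [DecidableEq (ι → ℝ)] :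
    IsBracketingCover 1 ({0, 1} : Finset (ι → ℝ)) where
  subset := by simp [Set.insert_subset_iff, zero_le_one]
  exists_isBracket t ht := ⟨0, by simp, 1, by simp, ⟨zero_le_one, by simp⟩, ht⟩

lemma sum_prod_pow_le {r : ℝ} (hr0 : 0 ≤ r) (hr1 : r < 1) (M : Finset (ι → ℕ)) :
    ∑ m ∈ M, ∏ j, r ^ m j ≤ ((1 - r)⁻¹) ^ Fintype.card ι := by
  classical
  have hsub : M ⊆ Fintype.piFinset fun j => M.image (· j) := fun m hm =>
    Fintype.mem_piFinset.2 fun j => mem_image_of_mem (· j) hm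
  calc ∑ m ∈ M, ∏ j, r ^ m j
      ≤ ∑ m ∈ Fintype.piFinset fun j => M.image (· j), ∏ j, r ^ m j :=
        sum_le_sum_of_subset_of_nonneg hsub fun _ _ _ => by positivity
    _ = ∏ j, ∑ i ∈ M.image (· j), r ^ i := (prod_univ_sum _ _).symm
    _ ≤ ∏ _j : ι, (1 - r)⁻¹ :=
        prod_le_prod (fun _ _ => by positivity) fun j _ => sum_pow_le_inv_one_sub hr0 hr1 _
    _ = ((1 - r)⁻¹) ^ Fintype.card ι := by simp

lemma card_le_of_forall_le_prod_pow [Nonempty ι] {q c : ℝ} (hq0 : 0 ≤ q) (hq1 : q < 1) (hc : 0 < c)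
    {M : Finset (ι → ℕ)} (hM : ∀ m ∈ M, c ≤ ∏ j, q ^ m j) :
    (#M : ℝ) ≤ ((c * (1 - q ^ Fintype.card ι))⁻¹) ^ Fintype.card ι := by
  set s := Fintype.card ι
  -- A Chernoff-type bound: each grid point has weight `(∏ q ^ m j) ^ s / c ^ s ≥ 1`.
  have hweight : #M * c ^ s ≤ ((1 - q ^ s)⁻¹) ^ s :=
    calc #M * c ^ s = ∑ _m ∈ M, c ^ s := by simp
      _ ≤ ∑ m ∈ M, (∏ j, q ^ m j) ^ s :=
        sum_le_sum fun m hm => pow_le_pow_left₀ hc.le (hM m hm) s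
      _ = ∑ m ∈ M, ∏ j, (q ^ s) ^ m j := by simp only [← prod_pow, ← pow_mul, mul_comm]
      _ ≤ ((1 - q ^ s)⁻¹) ^ s :=
        sum_prod_pow_le (by positivity) (pow_lt_one₀ hq0 hq1 Fintype.card_ne_zero) M
  rw [mul_inv, mul_pow, inv_pow c, inv_mul_eq_div]
  exact (le_div_iff₀ (by positivity)).2 hweight

lemma finite_setOf_le_prod_pow {q c : ℝ} (hq0 : 0 ≤ q) (hq1 : q < 1) (hc : 0 < c) :
    {m : ι → ℕ | c ≤ ∏ j, q ^ m j}.Finite := by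
  classical
  obtain ⟨B, hB⟩ := exists_pow_lt_of_lt_one hc hq1
  refine (Set.finite_Icc 0 fun _ => B).subset fun m hm => ⟨zero_le, fun j => ?_⟩
  by_contra! hj
  refine absurd (Set.mem_ofPred_eq ▸ hm) (not_le.2 (lt_of_le_of_lt ?_ hB))
  rw [prod_pow_eq_pow_sum]
  exact pow_le_pow_of_le_one hq0 hq1.le
    (hj.le.trans (single_le_sum (fun _ _ => zero_le) (mem_univ j)))

lemma exists_isBracket_pow {q : ℝ} (hq0 : 0 < q) (hq1 : q < 1) {t : ι → ℝ}
    (ht : t ∈ Set.Icc 0 1) (hprod : 0 < ∏ j, t j) :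
    ∃ m : ι → ℕ, t ∈ Set.Icc (fun j => q ^ (m j + 1)) (fun j => q ^ m j) ∧
      IsBracket (1 - q ^ Fintype.card ι) (fun j => q ^ (m j + 1)) (fun j => q ^ m j) ∧
      (∏ j, t j) * q ^ Fintype.card ι ≤ ∏ j, q ^ (m j + 1) := by
  have hpos (j : ι) : 0 < t j :=
    (ht.1 j).lt_of_ne' (prod_ne_zero_iff.1 hprod.ne' j (mem_univ j))
  choose m hlower hupper using fun j => exists_nat_pow_near_of_lt_one (hpos j) (ht.2 j) hq0 hq1
  have hshift : ∏ j, q ^ (m j + 1) = (∏ j, q ^ m j) * q ^ Fintype.card ι := by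
    simp [pow_succ, prod_mul_distrib]
  have hle_one : ∏ j, q ^ m j ≤ 1 :=
    prod_le_one (fun _ _ => by positivity) fun _ _ => pow_le_one₀ hq0.le hq1.le
  have hwidth : 0 ≤ 1 - q ^ Fintype.card ι := sub_nonneg.2 (pow_le_one₀ hq0.le hq1.le)
  refine ⟨m, ⟨fun j => (hlower j).le, hupper⟩,
    ⟨fun j => ((hlower j).trans_le (hupper j)).le, ?_⟩, ?_⟩
  · calc ∏ j, q ^ m j - ∏ j, q ^ (m j + 1) = (∏ j, q ^ m j) * (1 - q ^ Fintype.card ι) := by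
          rw [hshift, mul_one_sub]
      _ ≤ 1 - q ^ Fintype.card ι := mul_le_of_le_one_left hwidth hle_one
  · rw [hshift]
    gcongr with j
    · exact fun j _ => ht.1 j
    · exact hupper j

lemma exists_ge_prod_eq {t : ι → ℝ} (ht : t ∈ Set.Icc 0 1) {c : ℝ} (hc : ∏ j, t j ≤ c)
    (hc1 : c ≤ 1) : ∃ v ∈ Set.Icc (0 : ι → ℝ) 1, t ≤ v ∧ ∏ j, v j = c := by
  have hcont : ContinuousOn (fun a : ℝ => ∏ j, max (t j) a) (Set.Icc 0 1) := by fun_prop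
  have hzero : ∏ j, max (t j) 0 = ∏ j, t j := prod_congr rfl fun j _ => max_eq_left (ht.1 j)
  have hone : ∏ j, max (t j) 1 = 1 := prod_eq_one fun j _ => max_eq_right (ht.2 j)
  obtain ⟨a, ha, hprod⟩ : c ∈ (fun a : ℝ => ∏ j, max (t j) a) '' Set.Icc 0 1 :=
    intermediate_value_Icc zero_le_one hcont ⟨hzero.trans_le hc, hc1.trans_eq hone.symm⟩
  exact ⟨fun j => max (t j) a,
    ⟨fun j => le_max_of_le_left (ht.1 j), fun j => max_le (ht.2 j) ha.2⟩,
    fun j => le_max_left _ _, hprod⟩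

-- A point of volume less than `δ` is first enlarged to volume `δ` and then rounded up.
lemma isBracketingCover_of_pow_mem [Nonempty ι] {δ q : ℝ} (hδ0 : 0 < δ) (hδ1 : δ ≤ 1) (hq0 : 0 < q)
    (hq1 : q < 1) (hqδ : 1 - q ^ Fintype.card ι ≤ δ) {Γ : Finset (ι → ℝ)}
    (hΓ : (Γ : Set (ι → ℝ)) ⊆ Set.Icc 0 1) (hzero : 0 ∈ Γ)
    (hpow : ∀ m : ι → ℕ, δ * q ^ Fintype.card ι ≤ ∏ j, q ^ m j → (fun j => q ^ m j) ∈ Γ) :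
    IsBracketingCover (2 * δ) Γ := by
  have hround : ∀ t ∈ Set.Icc (0 : ι → ℝ) 1, δ ≤ ∏ j, t j →
      ∃ u ∈ Γ, ∃ v ∈ Γ, IsBracket δ u v ∧ t ∈ Set.Icc u v := by
    intro t ht hδt
    obtain ⟨m, htm, hbracket, hlower⟩ := exists_isBracket_pow hq0 hq1 ht (hδ0.trans_le hδt)
    have hu : δ * q ^ Fintype.card ι ≤ ∏ j, q ^ (m j + 1) :=
      (mul_le_mul_of_nonneg_right hδt (by positivity)).trans hlower
    exact ⟨_, hpow (fun j => m j + 1) hu,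
      _, hpow m (hu.trans (prod_mono_of_nonneg (fun j => by positivity) hbracket.le)),
      hbracket.mono hqδ, htm⟩
  refine ⟨hΓ, fun t ht => ?_⟩
  rcases le_total δ (∏ j, t j) with hδt | htδ
  · obtain ⟨u, hu, v, hv, huv, htuv⟩ := hround t ht hδt
    exact ⟨u, hu, v, hv, huv.mono (by linarith), htuv⟩
  · obtain ⟨w, hw, htw, hwδ⟩ := exists_ge_prod_eq ht htδ hδ1
    obtain ⟨u, hu, v, hv, huv, hwuv⟩ := hround w hw hwδ.ge
    refine ⟨0, hzero, v, hv, ⟨(hΓ hv).1, ?_⟩, ht.1, htw.trans hwuv.2⟩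
    have hu_le : ∏ j, u j ≤ δ := hwδ ▸ prod_mono_of_nonneg (hΓ hu).1 hwuv.1
    have hzero_prod : ∏ j, (0 : ι → ℝ) j = 0 := by simp
    linarith [huv.prod_sub_prod_le]

lemma exists_isBracketingCover_card_le [Nonempty ι] {δ : ℝ} (hδ0 : 0 < δ) (hδ1 : δ ≤ 1) :
    ∃ Γ : Finset (ι → ℝ), IsBracketingCover δ Γ ∧ (#Γ : ℝ) ≤ (12 / δ ^ 2) ^ Fintype.card ι := by
  classical
  set s := Fintype.card ι
  have hs : s ≠ 0 := Fintype.card_ne_zero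
  set q : ℝ := (1 - δ / 2) ^ (s : ℝ)⁻¹
  have hqs : q ^ s = 1 - δ / 2 := Real.rpow_inv_natCast_pow (by linarith) hs
  have hq0 : 0 < q := Real.rpow_pos_of_pos (by linarith) _
  have hq1 : q < 1 := Real.rpow_lt_one (by linarith) (by linarith) (by positivity)
  have hcut : 0 < δ / 2 * q ^ s := by positivity
  set M : Finset (ι → ℕ) := (finite_setOf_le_prod_pow hq0.le hq1 hcut).toFinset
  have hbase : δ ^ 2 / 8 ≤ δ / 2 * q ^ s * (1 - q ^ s) := by rw [hqs]; nlinarith [sq_nonneg δ]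
  have hM : (#M : ℝ) ≤ (8 / δ ^ 2) ^ s :=
    calc (#M : ℝ) ≤ ((δ / 2 * q ^ s * (1 - q ^ s))⁻¹) ^ s :=
          card_le_of_forall_le_prod_pow hq0.le hq1 hcut fun m hm => by simpa [M] using hm
      _ ≤ ((δ ^ 2 / 8)⁻¹) ^ s :=
          pow_le_pow_left₀ (inv_nonneg.2 (hbase.trans' (by positivity)))
            (inv_anti₀ (by positivity) hbase) s
      _ = (8 / δ ^ 2) ^ s := by rw [inv_div]
  refine ⟨insert 0 (M.image fun m j => q ^ m j), ?_, ?_⟩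
  · rw [show δ = 2 * (δ / 2) by ring]
    refine isBracketingCover_of_pow_mem (by linarith) (by linarith) hq0 hq1 (by linarith) ?_
      (mem_insert_self _ _) fun m hm =>
        mem_insert_of_mem (mem_image_of_mem _ (by simpa [M] using hm))
    simp only [coe_insert, coe_image, Set.insert_subset_iff, Set.image_subset_iff]
    exact ⟨⟨le_rfl, zero_le_one⟩,
      fun m _ => ⟨fun j => by positivity, fun j => pow_le_one₀ hq0.le hq1.le⟩⟩
  · have hcard : #(insert 0 (M.image fun m j => q ^ m j)) ≤ #M + 1 :=
      (card_insert_le _ _).trans (Nat.add_le_add_right card_image_le 1)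
    calc (#(insert 0 (M.image fun m j => q ^ m j)) : ℝ) ≤ #M + 1 := mod_cast hcard
      _ ≤ (8 / δ ^ 2) ^ s + (4 / δ ^ 2) ^ s := by
        gcongr
        exact one_le_pow₀ ((one_le_div (by positivity)).2 (by nlinarith))
      _ ≤ (8 / δ ^ 2 + 4 / δ ^ 2) ^ s := pow_add_pow_le (by positivity) (by positivity) hs
      _ = (12 / δ ^ 2) ^ s := by ring

lemma exists_isBracketingCover_pow_two_card_le [Nonempty ι] :
    ∃ Γ : ℕ → Finset (ι → ℝ), (∀ y ∈ Γ 0, y = 0 ∨ y = 1) ∧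
      ∀ k, IsBracketingCover ((1 / 2) ^ k) (Γ k) ∧
        (#(Γ k) : ℝ) ≤ (12 * 4 ^ k) ^ Fintype.card ι := by
  classical
  choose Γ hΓ hcard using fun k : ℕ =>
    exists_isBracketingCover_card_le (ι := ι) (δ := (1 / 2) ^ k) (by positivity)
      (pow_le_one₀ (by norm_num) (by norm_num))
  refine ⟨fun k => if k = 0 then {0, 1} else Γ k, fun y hy => by simpa using hy, fun k => ?_⟩
  rcases eq_or_ne k 0 with rfl | hk
  · simp only [if_true, pow_zero, mul_one]
    refine ⟨isBracketingCover_zero_one, ?_⟩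
    calc (#({0, 1} : Finset (ι → ℝ)) : ℝ) ≤ 2 := mod_cast card_le_two
      _ ≤ 12 := by norm_num
      _ ≤ 12 ^ Fintype.card ι := le_self_pow₀ (by norm_num) Fintype.card_ne_zero
  · have hpow : (12 : ℝ) / ((1 / 2) ^ k) ^ 2 = 12 * 4 ^ k := by
      rw [← pow_mul, mul_comm k, pow_mul, one_div_pow, div_eq_mul_inv, ← inv_pow]
      norm_num
    simp only [if_neg hk]
    exact ⟨hΓ k, hpow ▸ hcard k⟩

-- Each point of `Γ (k + 1)` is joined to the lower end of a bracket around it taken from `Γ k`.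
lemma abs_le_sum_of_forall_isBracket {Γ : ℕ → Finset (ι → ℝ)} {δ a : ℕ → ℝ} {F : (ι → ℝ) → ℝ}
    {K : ℕ} (hΓ : ∀ k, IsBracketingCover (δ k) (Γ k)) (hzero : ∀ y ∈ Γ 0, F y = 0)
    (hlink : ∀ k < K, ∀ u ∈ Γ k, ∀ v ∈ Γ (k + 1), IsBracket (δ k) u v → |F v - F u| ≤ a k) :
    ∀ k ≤ K, ∀ y ∈ Γ k, |F y| ≤ ∑ i ∈ range k, a i := by
  intro k
  induction k with
  | zero => intro _ y hy; simp [hzero y hy]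
  | succ k ih =>
    intro hk y hy
    have hyI : y ∈ Set.Icc 0 1 := (hΓ (k + 1)).subset hy
    obtain ⟨u, hu, v, -, huv, hyuv⟩ := (hΓ k).exists_isBracket y hyI
    calc |F y| ≤ |F u| + |F y - F u| := by linarith [abs_sub_abs_le_abs_sub (F y) (F u)]
      _ ≤ ∑ i ∈ range k, a i + a k :=
        add_le_add (ih (by lia) u hu) (hlink k hk u hu y hy (huv.of_le_right hyuv hyI.1))
      _ = ∑ i ∈ range (k + 1), a i := (sum_range_succ a k).symm

end BracketingCover

section Bernstein

variable {Ω : Type*} [MeasurableSpace Ω] {μ : Measure Ω}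

lemma mgf_le_exp_sq_mul_variance [IsProbabilityMeasure μ] {X : Ω → ℝ} (hX : AEMeasurable X μ)
    (hbound : ∀ᵐ ω ∂μ, |X ω| ≤ 1) (hmean : ∫ ω, X ω ∂μ = 0) {l : ℝ} (hl : |l| ≤ 1) :
    mgf X μ l ≤ Real.exp (l ^ 2 * Var[X; μ]) := by
  have hX_int : Integrable X μ := .of_bound hX.aestronglyMeasurable 1 hbound
  have hX_sq_int : Integrable (fun ω => X ω ^ 2) μ :=
    .of_bound (hX.pow_const 2).aestronglyMeasurable 1 <| by
      filter_upwards [hbound] with ω hω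
      simpa [sq_abs] using pow_le_one₀ (abs_nonneg _) hω (n := 2)
  have hexp_int : Integrable (fun ω => Real.exp (l * X ω)) μ :=
    integrable_exp_mul_of_mem_Icc hX (hbound.mono fun _ => abs_le.1)
  calc mgf X μ l ≤ ∫ ω, (1 + l * X ω + l ^ 2 * X ω ^ 2) ∂μ := by
        refine integral_mono_ae hexp_int (by fun_prop) ?_
        filter_upwards [hbound] with ω hω
        have hlX : |l * X ω| ≤ 1 := abs_mul l (X ω) ▸ mul_le_one₀ hl (abs_nonneg _) hω
        linarith [(abs_le.1 (Real.abs_exp_sub_one_sub_id_le hlX)).2, mul_pow l (X ω) 2]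
    _ = 1 + l ^ 2 * Var[X; μ] := by
        rw [integral_add (by fun_prop) (by fun_prop), integral_add (by fun_prop) (by fun_prop),
          integral_const_mul, integral_const_mul, hmean, variance_of_integral_eq_zero hX hmean]
        simp
    _ ≤ Real.exp (l ^ 2 * Var[X; μ]) := by linarith [Real.add_one_le_exp (l ^ 2 * Var[X; μ])]

variable {ι : Type*} {X : ι → Ω → ℝ}

-- Chernoff's bound with parameter `ε / (2 * V)`, which is at most `1` because `ε ≤ 2 * V`.
lemma measureReal_sum_ge_le_exp_of_iIndepFun (hindep : iIndepFun X μ) (hX : ∀ i, Measurable (X i))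
    (hbound : ∀ i, ∀ᵐ ω ∂μ, |X i ω| ≤ 1) (hmean : ∀ i, ∫ ω, X i ω ∂μ = 0) {s : Finset ι} {V ε : ℝ}
    (hV : ∑ i ∈ s, Var[X i; μ] ≤ V) (hV0 : 0 < V) (hε0 : 0 ≤ ε) (hεV : ε ≤ 2 * V) :
    μ.real {ω | ε ≤ ∑ i ∈ s, X i ω} ≤ Real.exp (-(ε ^ 2 / (4 * V))) := by
  have := hindep.isProbabilityMeasure
  set l := ε / (2 * V) with hl
  have hl0 : 0 ≤ l := by positivity
  have hl1 : |l| ≤ 1 := by rw [abs_of_nonneg hl0]; exact div_le_one_of_le₀ hεV (by positivity)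
  have hint : Integrable (fun ω => Real.exp (l * (∑ i ∈ s, X i) ω)) μ :=
    hindep.integrable_exp_mul_sum hX fun i _ =>
      integrable_exp_mul_of_mem_Icc (hX i).aemeasurable ((hbound i).mono fun _ => abs_le.1)
  calc μ.real {ω | ε ≤ ∑ i ∈ s, X i ω}
      ≤ Real.exp (-l * ε) * mgf (∑ i ∈ s, X i) μ l := by
        simpa only [Finset.sum_apply] using measure_ge_le_exp_mul_mgf ε hl0 hint
    _ ≤ Real.exp (-l * ε) * ∏ i ∈ s, Real.exp (l ^ 2 * Var[X i; μ]) := by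
        rw [hindep.mgf_sum hX]
        gcongr with i
        · exact fun i _ => mgf_nonneg
        · exact mgf_le_exp_sq_mul_variance (hX i).aemeasurable (hbound i) (hmean i) hl1
    _ = Real.exp (-l * ε + l ^ 2 * ∑ i ∈ s, Var[X i; μ]) := by
        rw [← Real.exp_sum, ← mul_sum, ← Real.exp_add]
    _ ≤ Real.exp (-l * ε + l ^ 2 * V) := by gcongr
    _ = Real.exp (-(ε ^ 2 / (4 * V))) := by rw [hl]; congr 1; field_simp; ring

lemma measureReal_abs_sum_ge_le_exp_of_iIndepFun (hindep : iIndepFun X μ)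
    (hX : ∀ i, Measurable (X i)) (hbound : ∀ i, ∀ᵐ ω ∂μ, |X i ω| ≤ 1)
    (hmean : ∀ i, ∫ ω, X i ω ∂μ = 0) {s : Finset ι} {V ε : ℝ} (hV : ∑ i ∈ s, Var[X i; μ] ≤ V)
    (hV0 : 0 < V) (hε0 : 0 ≤ ε) (hεV : ε ≤ 2 * V) :
    μ.real {ω | ε ≤ |∑ i ∈ s, X i ω|} ≤ 2 * Real.exp (-(ε ^ 2 / (4 * V))) := by
  have := hindep.isProbabilityMeasure
  have hupper := measureReal_sum_ge_le_exp_of_iIndepFun hindep hX hbound hmean hV hV0 hε0 hεV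
  have hlower : μ.real {ω | ε ≤ ∑ i ∈ s, -X i ω} ≤ Real.exp (-(ε ^ 2 / (4 * V))) :=
    measureReal_sum_ge_le_exp_of_iIndepFun (X := fun i => -X i)
      (hindep.comp (fun _ x => -x) fun _ => measurable_neg) (fun i => (hX i).neg)
      (by simpa using hbound) (by simpa [integral_neg] using hmean)
      (by simpa [variance_neg] using hV) hV0 hε0 hεV
  have hunion : {ω | ε ≤ |∑ i ∈ s, X i ω|} =
      {ω | ε ≤ ∑ i ∈ s, X i ω} ∪ {ω | ε ≤ ∑ i ∈ s, -X i ω} := by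
    ext ω
    simp [le_abs]
  rw [hunion]
  linarith [measureReal_union_le (μ := μ) {ω | ε ≤ ∑ i ∈ s, X i ω} {ω | ε ≤ ∑ i ∈ s, -X i ω}]

end Bernstein

section EmpiricalMeasure

variable {Ω : Type*} [MeasurableSpace Ω] {μ : Measure Ω} [IsProbabilityMeasure μ]

lemma measureReal_pi_abs_sum_ge_le {κ : Type*} [Fintype κ] {f : Ω → ℝ} (hf : Measurable f)
    (hbound : ∀ᵐ ω ∂μ, |f ω| ≤ 1) (hmean : ∫ ω, f ω ∂μ = 0) {V ε : ℝ}
    (hV : Fintype.card κ * Var[f; μ] ≤ V) (hV0 : 0 < V) (hε0 : 0 ≤ ε) (hεV : ε ≤ 2 * V) :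
    (Measure.pi fun _ : κ => μ).real {x | ε ≤ |∑ n, f (x n)|} ≤
      2 * Real.exp (-(ε ^ 2 / (4 * V))) := by
  have heval (n : κ) : MeasurePreserving (Function.eval n) (Measure.pi fun _ : κ => μ) μ :=
    measurePreserving_eval _ n
  have hmean_eval (n : κ) : ∫ x, f (x n) ∂(Measure.pi fun _ : κ => μ) = 0 := by
    rw [← hmean, ← (heval n).map_eq, integral_map (heval n).aemeasurable hf.aestronglyMeasurable,
      (heval n).map_eq]
  have hvar : ∑ n : κ, Var[fun x => f (x n); Measure.pi fun _ : κ => μ] ≤ V :=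
    calc ∑ n : κ, Var[fun x => f (x n); Measure.pi fun _ : κ => μ]
        = ∑ _n : κ, Var[f; μ] :=
          sum_congr rfl fun n _ => (heval n).variance_fun_comp hf.aemeasurable
      _ = Fintype.card κ * Var[f; μ] := by simp
      _ ≤ V := hV
  exact measureReal_abs_sum_ge_le_exp_of_iIndepFun (iIndepFun_pi fun _ => hf.aemeasurable)
    (fun n => hf.comp (measurable_pi_apply n))
    (fun n => (heval n).quasiMeasurePreserving.ae hbound) hmean_eval hvar hV0 hε0 hεV

lemma integral_indicator_one_sub_measureReal {A : Set Ω} (hA : MeasurableSet A) :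
    ∫ ω, (A.indicator (1 : Ω → ℝ) ω - μ.real A) ∂μ = 0 := by
  have hint : Integrable (A.indicator (1 : Ω → ℝ)) μ := (integrable_const (1 : ℝ)).indicator hA
  rw [integral_sub hint (integrable_const _), integral_indicator_one hA]
  simp

lemma variance_indicator_one_sub_measureReal_le {A : Set Ω} (hA : MeasurableSet A) :
    Var[fun ω => A.indicator (1 : Ω → ℝ) ω - μ.real A; μ] ≤ μ.real A := by
  have hmeas : AEStronglyMeasurable (A.indicator (1 : Ω → ℝ)) μ :=
    (measurable_one.indicator hA).aestronglyMeasurable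
  calc Var[fun ω => A.indicator (1 : Ω → ℝ) ω - μ.real A; μ]
      = Var[A.indicator (1 : Ω → ℝ); μ] := variance_sub_const hmeas _
    _ ≤ ∫ ω, (A.indicator (1 : Ω → ℝ) ^ 2) ω ∂μ := variance_le_expectation_sq hmeas
    _ = ∫ ω, A.indicator (1 : Ω → ℝ) ω ∂μ := by
        congr with ω
        by_cases hω : ω ∈ A <;> simp [hω]
    _ = μ.real A := integral_indicator_one hA

lemma abs_indicator_one_sub_measureReal_le (A : Set Ω) (ω : Ω) :
    |A.indicator (1 : Ω → ℝ) ω - μ.real A| ≤ 1 := by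
  have h0 : 0 ≤ μ.real A := measureReal_nonneg
  have h1 : μ.real A ≤ 1 := measureReal_le_one
  by_cases hω : ω ∈ A <;> simp only [hω, Set.indicator_of_mem, Set.indicator_of_notMem, abs_le,
    Pi.one_apply, not_false_eq_true] <;> constructor <;> linarith

lemma measureReal_pi_abs_sum_indicator_sub_ge_le {κ : Type*} [Fintype κ] {A : Set Ω}
    (hA : MeasurableSet A) {V ε : ℝ} (hV : Fintype.card κ * μ.real A ≤ V) (hV0 : 0 < V)
    (hε0 : 0 ≤ ε) (hεV : ε ≤ 2 * V) :
    (Measure.pi fun _ : κ => μ).real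
        {x | ε ≤ |∑ n, (A.indicator (1 : Ω → ℝ) (x n) - μ.real A)|} ≤
      2 * Real.exp (-(ε ^ 2 / (4 * V))) := by
  refine measureReal_pi_abs_sum_ge_le ((measurable_one.indicator hA).sub_const _)
    (.of_forall (abs_indicator_one_sub_measureReal_le A))
    (integral_indicator_one_sub_measureReal hA) (le_trans ?_ hV) hV0 hε0 hεV
  gcongr
  exact variance_indicator_one_sub_measureReal_le hA

lemma exists_mem_forall_notMem_of_sum_measureReal_lt_one {κ : Type*} {I : Finset κ} {B : κ → Set Ω}
    (hB : ∑ i ∈ I, μ.real (B i) < 1) {S : Set Ω} (hS : ∀ᵐ ω ∂μ, ω ∈ S) :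
    ∃ ω ∈ S, ∀ i ∈ I, ω ∉ B i := by
  by_contra! h
  have hcover : ∀ᵐ ω ∂μ, ω ∈ ⋃ i ∈ I, B i := hS.mono fun ω hω => by simpa using h ω hω
  have hone : μ.real (⋃ i ∈ I, B i) = 1 :=
    (measureReal_congr (Filter.eventuallyEq_univ.2 hcover)).trans probReal_univ
  exact absurd (hone ▸ measureReal_biUnion_finset_le I B) hB.not_ge

end EmpiricalMeasure

section LocalDiscrepancy

/-- The box `[0,t)`, as a subset of `[0,1)^ι`. No lower bound is imposed on the coordinates, because
all points and measures considered live in `[0,1)^ι`. -/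
def anchoredBox {ι : Type*} (t : ι → ℝ) : Set (ι → ℝ) := Set.univ.pi fun j => Set.Iio (t j)

lemma anchoredBox_mono {ι : Type*} {u v : ι → ℝ} (huv : u ≤ v) : anchoredBox u ⊆ anchoredBox v :=
  Set.pi_mono fun j _ => Set.Iio_subset_Iio (huv j)

lemma measurableSet_anchoredBox {ι : Type*} [Countable ι] {t : ι → ℝ} :
    MeasurableSet (anchoredBox t) :=
  .univ_pi fun _ => measurableSet_Iio

/-- The uniform distribution on the half-open unit cube `[0,1)^ι`, the law of a random point, as a
measure on the whole space `ι → ℝ`. -/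
noncomputable def cubeMeasure (ι : Type*) [Fintype ι] : Measure (ι → ℝ) :=
  volume.restrict (Set.univ.pi fun _ => Set.Ico 0 1)

section CubeMeasure

variable {ι : Type*} [Fintype ι] {t u v : ι → ℝ}

instance : IsProbabilityMeasure (cubeMeasure ι) := ⟨by simp [cubeMeasure, volume_pi_pi]⟩

lemma ae_mem_Ico_cubeMeasure : ∀ᵐ z ∂cubeMeasure ι, ∀ j, z j ∈ Set.Ico (0 : ℝ) 1 :=
  (ae_restrict_mem (.univ_pi fun _ => measurableSet_Ico)).mono fun _ hz j => hz j (Set.mem_univ j)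

lemma measureReal_cubeMeasure_anchoredBox (ht : t ∈ Set.Icc 0 1) :
    (cubeMeasure ι).real (anchoredBox t) = ∏ j, t j := by
  have hinter : anchoredBox t ∩ Set.univ.pi (fun _ => Set.Ico 0 1) =
      Set.univ.pi fun j => Set.Ico 0 (t j) := by
    rw [anchoredBox, ← Set.pi_inter_distrib]
    congr with j a
    simp only [Set.mem_inter_iff, Set.mem_Iio, Set.mem_Ico]
    exact ⟨fun h => ⟨h.2.1, h.1⟩, fun h => ⟨h.2, h.1, h.2.trans_le (ht.2 j)⟩⟩
  rw [cubeMeasure, measureReal_restrict_apply measurableSet_anchoredBox, hinter, measureReal_def]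
  simpa using Real.volume_pi_Ico_toReal (a := 0) ht.1

lemma measureReal_cubeMeasure_anchoredBox_sdiff (hu : u ∈ Set.Icc 0 1) (hv : v ∈ Set.Icc 0 1)
    (huv : u ≤ v) :
    (cubeMeasure ι).real (anchoredBox v \ anchoredBox u) = ∏ j, v j - ∏ j, u j := by
  rw [measureReal_sdiff (anchoredBox_mono huv) measurableSet_anchoredBox,
    measureReal_cubeMeasure_anchoredBox hu, measureReal_cubeMeasure_anchoredBox hv]

end CubeMeasure

variable {N s : ℕ} {x : Fin N → Fin s → ℝ} {t u v : Fin s → ℝ}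

lemma localDisc_eq_sum_indicator_div_sub :
    localDisc x t =
      (∑ n, (anchoredBox t).indicator (1 : (Fin s → ℝ) → ℝ) (x n)) / N - ∏ j, t j := by
  classical
  rw [localDisc, card_filter]
  push_cast
  congr! with n
  simp [Set.indicator_apply, anchoredBox]

lemma localDisc_zero (hs : 0 < s) (hx : ∀ n j, 0 ≤ x n j) : localDisc x 0 = 0 := by
  have : Nonempty (Fin s) := ⟨⟨0, hs⟩⟩
  simp [localDisc, (hx _ _).not_gt, hs.ne']

lemma localDisc_one (hN : 0 < N) (hx : ∀ n j, x n j < 1) : localDisc x 1 = 0 := by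
  simp [localDisc, hx, hN.ne']

lemma natCast_mul_localDisc_sub (hN : 0 < N) (hu : u ∈ Set.Icc 0 1) (hv : v ∈ Set.Icc 0 1)
    (huv : u ≤ v) :
    N * (localDisc x v - localDisc x u) =
      ∑ n, ((anchoredBox v \ anchoredBox u).indicator (1 : (Fin s → ℝ) → ℝ) (x n) -
        (cubeMeasure (Fin s)).real (anchoredBox v \ anchoredBox u)) := by
  rw [measureReal_cubeMeasure_anchoredBox_sdiff hu hv huv,
    Set.indicator_sdiff (anchoredBox_mono huv)]
  simp only [localDisc_eq_sum_indicator_div_sub, Pi.sub_apply, sum_sub_distrib, sum_const,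
    card_univ, Fintype.card_fin, nsmul_eq_mul]
  field_simp
  ring

lemma abs_localDisc_le_of_isBracket {b δ : ℝ} (hu0 : 0 ≤ u) (huv : IsBracket δ u v)
    (ht : t ∈ Set.Icc u v) (hu : |localDisc x u| ≤ b) (hv : |localDisc x v| ≤ b) :
    |localDisc x t| ≤ b + δ := by
  have hcount {y z : Fin s → ℝ} (hyz : y ≤ z) :
      (∑ n, (anchoredBox y).indicator (1 : (Fin s → ℝ) → ℝ) (x n)) / N ≤
        (∑ n, (anchoredBox z).indicator (1 : (Fin s → ℝ) → ℝ) (x n)) / N :=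
    div_le_div_of_nonneg_right (sum_le_sum fun n _ =>
      Set.indicator_le_indicator_of_subset (anchoredBox_mono hyz) (fun _ => zero_le_one) (x n))
      N.cast_nonneg
  have hut := prod_mono_of_nonneg hu0 ht.1
  have htv := prod_mono_of_nonneg (hu0.trans ht.1) ht.2
  simp only [localDisc_eq_sum_indicator_div_sub, abs_le] at hu hv ⊢
  constructor <;> linarith [hcount ht.1, hcount ht.2, huv.prod_sub_prod_le]

lemma measureReal_pi_abs_localDisc_sub_ge_le (hN : 0 < N) (hu : u ∈ Set.Icc 0 1)
    (hv : v ∈ Set.Icc 0 1) {p a : ℝ} (huv : IsBracket p u v) (hp : 0 < p) (ha0 : 0 ≤ a)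
    (hap : a ≤ 2 * p) :
    (Measure.pi fun _ : Fin N => cubeMeasure (Fin s)).real
        {x | a ≤ |localDisc x v - localDisc x u|} ≤
      2 * Real.exp (-(N * a ^ 2 / (4 * p))) := by
  have hN' : (0 : ℝ) < N := mod_cast hN
  have hevent : {x : Fin N → Fin s → ℝ | a ≤ |localDisc x v - localDisc x u|} =
      {x | N * a ≤ |∑ n, ((anchoredBox v \ anchoredBox u).indicator 1 (x n) -
        (cubeMeasure (Fin s)).real (anchoredBox v \ anchoredBox u))|} := by
    ext x
    simp only [Set.mem_ofPred_eq]
    rw [← natCast_mul_localDisc_sub hN hu hv huv.le, abs_mul, Nat.abs_cast,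
      mul_le_mul_iff_right₀ hN']
  have hvol : Fintype.card (Fin N) *
      (cubeMeasure (Fin s)).real (anchoredBox v \ anchoredBox u) ≤ N * p := by
    rw [Fintype.card_fin, measureReal_cubeMeasure_anchoredBox_sdiff hu hv huv.le]
    exact mul_le_mul_of_nonneg_left huv.prod_sub_prod_le hN'.le
  have hexponent : (N * a) ^ 2 / (4 * (N * p)) = N * a ^ 2 / (4 * p) := by field_simp
  rw [hevent, ← hexponent]
  exact measureReal_pi_abs_sum_indicator_sub_ge_le
    (measurableSet_anchoredBox.diff measurableSet_anchoredBox) hvol (by positivity) (by positivity)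
    (by nlinarith)

lemma exists_forall_isBracket_abs_localDisc_sub_lt (hN : 0 < N) {K : ℕ} {p a : ℕ → ℝ}
    {Γ : ℕ → Finset (Fin s → ℝ)} (hΓ : ∀ k, (Γ k : Set (Fin s → ℝ)) ⊆ Set.Icc 0 1)
    (hp : ∀ k < K, 0 < p k) (ha0 : ∀ k < K, 0 ≤ a k) (hap : ∀ k < K, a k ≤ 2 * p k)
    (hsum : ∑ k ∈ range K, (#(Γ k) * #(Γ (k + 1)) : ℝ) *
      (2 * Real.exp (-(N * a k ^ 2 / (4 * p k)))) < 1) :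
    ∃ x : Fin N → Fin s → ℝ, (∀ n j, x n j ∈ Set.Ico (0 : ℝ) 1) ∧
      ∀ k < K, ∀ u ∈ Γ k, ∀ v ∈ Γ (k + 1), IsBracket (p k) u v →
        |localDisc x v - localDisc x u| < a k := by
  classical
  let links (k : ℕ) : Finset ((Fin s → ℝ) × (Fin s → ℝ)) :=
    {i ∈ Γ k ×ˢ Γ (k + 1) | IsBracket (p k) i.1 i.2}
  let bad (i : Σ _ : ℕ, (Fin s → ℝ) × (Fin s → ℝ)) : Set (Fin N → Fin s → ℝ) :=
    {x | a i.1 ≤ |localDisc x i.2.2 - localDisc x i.2.1|}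
  have hbad : ∀ k < K, ∑ i ∈ links k,
      (Measure.pi fun _ : Fin N => cubeMeasure (Fin s)).real (bad ⟨k, i⟩) ≤
        (#(Γ k) * #(Γ (k + 1)) : ℝ) * (2 * Real.exp (-(N * a k ^ 2 / (4 * p k)))) := by
    intro k hk
    have hcard : (#(links k) : ℝ) ≤ #(Γ k) * #(Γ (k + 1)) := by
      exact_mod_cast (card_filter_le _ _).trans_eq (card_product _ _)
    refine (sum_le_card_nsmul _ _ _ fun i hi => ?_).trans (nsmul_eq_mul _ _ |>.trans_le
      (mul_le_mul_of_nonneg_right hcard (by positivity)))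
    obtain ⟨hmem, hbracket⟩ := mem_filter.1 hi
    obtain ⟨hu, hv⟩ := mem_product.1 hmem
    exact measureReal_pi_abs_localDisc_sub_ge_le hN (hΓ _ hu) (hΓ _ hv) hbracket (hp k hk)
      (ha0 k hk) (hap k hk)
  have hmem_cube : ∀ᵐ x ∂(Measure.pi fun _ : Fin N => cubeMeasure (Fin s)),
      ∀ n j, x n j ∈ Set.Ico (0 : ℝ) 1 := ae_all_iff.2 fun n =>
    (measurePreserving_eval (fun _ : Fin N => cubeMeasure (Fin s)) n).quasiMeasurePreserving.ae
      ae_mem_Ico_cubeMeasure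
  obtain ⟨x, hx, hgood⟩ := exists_mem_forall_notMem_of_sum_measureReal_lt_one
    (μ := Measure.pi fun _ : Fin N => cubeMeasure (Fin s)) (I := (range K).sigma links) (B := bad)
    (S := {x | ∀ n j, x n j ∈ Set.Ico (0 : ℝ) 1})
    (((sum_sigma _ _ _).trans_le (sum_le_sum fun k hk => hbad k (mem_range.1 hk))).trans_lt hsum)
    hmem_cube
  exact ⟨x, hx, fun k hk u hu v hv huv => not_le.1 (hgood ⟨k, u, v⟩ (by simp [links, *]))⟩

end LocalDiscrepancy

section Chaining

lemma exp_neg_five_le : Real.exp (-5) ≤ 1 / 32 := by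
  have htwo : 2 ≤ Real.exp 1 := by linarith [Real.add_one_le_exp 1]
  calc Real.exp (-5) = (Real.exp 1 ^ 5)⁻¹ := by rw [← Real.exp_nat_mul, ← Real.exp_neg]; norm_num
    _ ≤ (2 ^ 5)⁻¹ := by gcongr
    _ = 1 / 32 := by norm_num

lemma exp_neg_forty_mul_pow_le (k : ℕ) :
    Real.exp (-(40 * (9 / 8) ^ k)) ≤ (1 / 32) ^ (k + 8) := by
  have hbernoulli : 1 + k * (1 / 8) ≤ (1 + 1 / 8 : ℝ) ^ k := one_add_mul_le_pow (by norm_num) k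
  calc Real.exp (-(40 * (9 / 8) ^ k)) ≤ Real.exp (-(40 + 5 * k)) := by
        gcongr
        norm_num at hbernoulli
        linarith
    _ = Real.exp (-5) ^ (k + 8) := by rw [← Real.exp_nat_mul]; congr 1; push_cast; ring
    _ ≤ (1 / 32) ^ (k + 8) := by gcongr; exact exp_neg_five_le

lemma card_bound_mul_exp_le {s : ℕ} (hs : s ≠ 0) (k : ℕ) :
    ((12 * 4 ^ k) ^ s * (12 * 4 ^ (k + 1)) ^ s : ℝ) *
      (2 * Real.exp (-(40 * s * (9 / 8) ^ k))) ≤ (1 / 2) ^ (k + 2) := by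
  have hexp : Real.exp (-(40 * s * (9 / 8) ^ k)) = Real.exp (-(40 * (9 / 8) ^ k)) ^ s := by
    rw [← Real.exp_nat_mul]; congr 1; ring
  have hbase : (12 * 4 ^ k * (12 * 4 ^ (k + 1)) * (1 / 32) ^ (k + 8) : ℝ) ≤ (1 / 2) ^ (k + 3) := by
    have hpow : (4 : ℝ) ^ k * 4 ^ k * (1 / 32) ^ k = (1 / 2) ^ k := by
      rw [← mul_pow, ← mul_pow]; norm_num
    calc (12 * 4 ^ k * (12 * 4 ^ (k + 1)) * (1 / 32) ^ (k + 8) : ℝ)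
        = 576 * (1 / 32) ^ 8 * (4 ^ k * 4 ^ k * (1 / 32) ^ k) := by ring
      _ ≤ (1 / 2) ^ 3 * (4 ^ k * 4 ^ k * (1 / 32) ^ k) := by gcongr; norm_num
      _ = (1 / 2) ^ (k + 3) := by rw [hpow]; ring
  calc ((12 * 4 ^ k) ^ s * (12 * 4 ^ (k + 1)) ^ s : ℝ) *
      (2 * Real.exp (-(40 * s * (9 / 8) ^ k)))
      = 2 * (12 * 4 ^ k * (12 * 4 ^ (k + 1)) * Real.exp (-(40 * (9 / 8) ^ k))) ^ s := by
        rw [hexp, ← mul_pow, mul_left_comm, ← mul_pow]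
    _ ≤ 2 * (12 * 4 ^ k * (12 * 4 ^ (k + 1)) * (1 / 32) ^ (k + 8)) ^ s := by
        gcongr
        exact exp_neg_forty_mul_pow_le k
    _ ≤ 2 * ((1 / 2) ^ (k + 3)) ^ s := by gcongr
    _ ≤ 2 * (1 / 2) ^ (k + 3) := by
        gcongr
        exact pow_le_of_le_one (by positivity) (pow_le_one₀ (by norm_num) (by norm_num)) hs
    _ = (1 / 2) ^ (k + 2) := by ring

lemma exists_nat_pow_le_and_forall_lt {ρ r : ℝ} (hρ : 0 < ρ) (hr : r < 1) :
    ∃ K : ℕ, r ^ K ≤ ρ ∧ ∀ k < K, ρ < r ^ k := by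
  classical
  have hex : ∃ K : ℕ, r ^ K ≤ ρ := (exists_pow_lt_of_lt_one hρ hr).imp fun _ => le_of_lt
  exact ⟨Nat.find hex, Nat.find_spec hex, fun k hk => not_le.1 (Nat.find_min hex hk)⟩

variable {N s : ℕ}

lemma exists_forall_isBracket_abs_localDisc_sub_lt_pow (hN : 0 < N) (hs : 0 < s) {ρ : ℝ}
    (hρ0 : 0 ≤ ρ) (hρ : N * ρ ^ 2 = s) {K : ℕ} (hK : ∀ k < K, ρ < (1 / 2) ^ k)
    {Γ : ℕ → Finset (Fin s → ℝ)} (hΓ : ∀ k, (Γ k : Set (Fin s → ℝ)) ⊆ Set.Icc 0 1)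
    (hcard : ∀ k, (#(Γ k) : ℝ) ≤ (12 * 4 ^ k) ^ s) :
    ∃ x : Fin N → Fin s → ℝ, (∀ n j, x n j ∈ Set.Ico (0 : ℝ) 1) ∧
      ∀ k < K, ∀ u ∈ Γ k, ∀ v ∈ Γ (k + 1), IsBracket ((1 / 2) ^ k) u v →
        |localDisc x v - localDisc x u| < 80 * ((3 / 4) ^ k * ρ) := by
  have hexponent (k : ℕ) : N * (80 * ((3 / 4) ^ k * ρ)) ^ 2 / (4 * (40 * (1 / 2) ^ k)) =
      40 * s * (9 / 8) ^ k := by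
    have hpow : ((3 / 4 : ℝ) ^ k) ^ 2 = (9 / 8) ^ k * (1 / 2) ^ k := by
      rw [← pow_mul, mul_comm k, pow_mul, ← mul_pow]; norm_num
    rw [mul_pow, mul_pow, hpow, ← hρ]
    field_simp
    ring
  have hsum : ∑ k ∈ range K, (#(Γ k) * #(Γ (k + 1)) : ℝ) *
      (2 * Real.exp (-(N * (80 * ((3 / 4) ^ k * ρ)) ^ 2 / (4 * (40 * (1 / 2) ^ k))))) < 1 :=
    calc _ ≤ ∑ k ∈ range K, (1 / 2 : ℝ) ^ (k + 2) := by
          refine sum_le_sum fun k _ => le_trans ?_ (card_bound_mul_exp_le hs.ne' k)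
          rw [hexponent]
          gcongr
          exacts [hcard k, hcard (k + 1)]
      _ = (∑ k ∈ range K, (1 / 2 : ℝ) ^ k) * (1 / 4) := by
          rw [sum_mul]; exact sum_congr rfl fun k _ => by ring
      _ < 1 := by linarith [sum_geometric_two_le K]
  have hdev : ∀ k < K, 80 * ((3 / 4) ^ k * ρ) ≤ 2 * (40 * (1 / 2) ^ k) := fun k hk => by
    have : (3 / 4 : ℝ) ^ k * ρ ≤ ρ :=
      mul_le_of_le_one_left hρ0 (pow_le_one₀ (by norm_num) (by norm_num))
    linarith [hK k hk]
  obtain ⟨x, hx, hlink⟩ := exists_forall_isBracket_abs_localDisc_sub_lt hN hΓ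
    (fun k _ => by positivity) (fun k _ => by positivity) hdev hsum
  exact ⟨x, hx, fun k hk u hu v hv huv => hlink k hk u hu v hv
    (huv.mono (le_mul_of_one_le_left (by positivity) (by norm_num)))⟩

lemma exists_forall_abs_localDisc_le (hN : 0 < N) (hs : 0 < s) :
    ∃ x : Fin N → Fin s → ℝ, (∀ n j, x n j ∈ Set.Ico (0 : ℝ) 1) ∧
      ∀ t ∈ Set.Icc (0 : Fin s → ℝ) 1, |localDisc x t| ≤ 321 * √(s / N) := by
  have : Nonempty (Fin s) := ⟨⟨0, hs⟩⟩
  set ρ := √(s / N : ℝ) with hρ_def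
  have hρ0 : 0 < ρ := Real.sqrt_pos.2 (by positivity)
  have hρ : N * ρ ^ 2 = s := by
    rw [hρ_def, Real.sq_sqrt (by positivity)]
    field_simp
  obtain ⟨K, hKρ, hρK⟩ := exists_nat_pow_le_and_forall_lt hρ0 (one_half_lt_one (α := ℝ))
  obtain ⟨Γ, hΓ0, hΓ⟩ := exists_isBracketingCover_pow_two_card_le (ι := Fin s)
  obtain ⟨x, hx, hlink⟩ := exists_forall_isBracket_abs_localDisc_sub_lt_pow hN hs hρ0.le hρ hρK
    (fun k => (hΓ k).1.subset) (fun k => by simpa using (hΓ k).2)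
  have hbase : ∀ y ∈ Γ 0, localDisc x y = 0 := fun y hy => by
    rcases hΓ0 y hy with rfl | rfl
    exacts [localDisc_zero hs fun n j => (hx n j).1, localDisc_one hN fun n j => (hx n j).2]
  have hfinest : ∀ y ∈ Γ K, |localDisc x y| ≤ 320 * ρ := fun y hy =>
    calc |localDisc x y| ≤ ∑ k ∈ range K, 80 * ((3 / 4) ^ k * ρ) :=
          abs_le_sum_of_forall_isBracket (fun k => (hΓ k).1) hbase
            (fun k hk u hu v hv huv => (hlink k hk u hu v hv huv).le) K le_rfl y hy
      _ = 80 * ρ * ∑ k ∈ range K, (3 / 4 : ℝ) ^ k := by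
          rw [mul_sum]; exact sum_congr rfl fun k _ => by ring
      _ ≤ 80 * ρ * (1 - 3 / 4)⁻¹ := by
          gcongr
          exact sum_pow_le_inv_one_sub (by norm_num) (by norm_num) _
      _ = 320 * ρ := by ring
  refine ⟨x, hx, fun t ht => ?_⟩
  obtain ⟨u, hu, v, hv, huv, htuv⟩ := (hΓ K).1.exists_isBracket t ht
  calc |localDisc x t| ≤ 320 * ρ + (1 / 2) ^ K :=
        abs_localDisc_le_of_isBracket ((hΓ K).1.subset hu).1 huv htuv (hfinest u hu) (hfinest v hv)
    _ ≤ 321 * ρ := by linarith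

end Chaining

lemma starDisc_nonneg {N s : ℕ} (x : Fin N → Fin s → ℝ) : 0 ≤ starDisc x :=
  Real.sSup_nonneg <| by
    rintro _ ⟨t, -, rfl⟩
    exact abs_nonneg _

lemma starDisc_le {N s : ℕ} {x : Fin N → Fin s → ℝ} {b : ℝ}
    (h : ∀ t ∈ Set.Icc (0 : Fin s → ℝ) 1, |localDisc x t| ≤ b) : starDisc x ≤ b := by
  refine csSup_le ⟨_, 0, by simp, rfl⟩ ?_
  rintro _ ⟨t, ht, rfl⟩
  exact h t ⟨fun j => (ht j).1, fun j => (ht j).2⟩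

lemma minDisc_le_starDisc {N s : ℕ} {x : Fin N → Fin s → ℝ}
    (hx : ∀ n j, x n j ∈ Set.Ico (0 : ℝ) 1) : minDisc N s ≤ starDisc x := by
  refine csInf_le ⟨0, ?_⟩ ⟨x, hx, rfl⟩
  rintro _ ⟨y, -, rfl⟩
  exact starDisc_nonneg y

/-- `disc(N,s) ≤ C √(s/N)` for an absolute constant `C > 0`. -/
theorem minDisc_le_sqrt_s_div_N :
    ∃ C : ℝ, 0 < C ∧ ∀ N s : ℕ, 1 ≤ N → 1 ≤ s →
      minDisc N s ≤ C * Real.sqrt ((s : ℝ) / N) := by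
  refine ⟨321, by norm_num, fun N s hN hs => ?_⟩
  obtain ⟨x, hx, hdisc⟩ := exists_forall_abs_localDisc_le hN hs
  exact (minDisc_le_starDisc hx).trans (starDisc_le hdisc)
end

section
/- There exist constants c > 0 and ε₀ > 0 such that for all N, s ∈ ℕ one has disc(N,s) ≥ min(ε₀, c·s/N). -/
open Finset

/-!
Fix `b = 1 - 1/(2N)` and test a point set with discrepancy `D` on the boxes `[0,t)` whose corner
`t` has entries `b` on a set `J` of coordinates and `1` elsewhere. Let `u` be the proportion of
points missed by the smallest of these boxes, `[0,b)^s`. Charging each missed point to one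
coordinate yields a `J` with `#J ≤ N u` whose box misses the same points. That box has volume at
least `1 - #J/(2N) ≥ 1 - u/2`, so `u ≤ u/2 + D`, i.e. `u ≤ 2D`. The box `[0,b)^s` therefore gives
`1 - b^s ≤ u + D ≤ 3D`, and the left side has order `min(1, s/N)`.
-/

section Preliminaries

theorem exists_subset_biUnion_eq_card_le {ι α : Type*} [DecidableEq α]
    (I : Finset ι) (A : ι → Finset α) :
    ∃ J ⊆ I, J.biUnion A = I.biUnion A ∧ #J ≤ #(I.biUnion A) := by
  classical
  have covered : ∀ p : I.biUnion A, ∃ i ∈ I, p.1 ∈ A i := fun p => mem_biUnion.1 p.2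
  choose f hfI hfA using covered
  have image_subset : univ.image f ⊆ I := image_subset_iff.2 fun p _ => hfI p
  refine ⟨univ.image f, image_subset, ?_, card_image_le.trans (by simp)⟩
  refine (biUnion_subset_biUnion_of_subset_left A image_subset).antisymm fun p hp => ?_
  exact mem_biUnion.2 ⟨f ⟨p, hp⟩, mem_image_of_mem f (mem_univ _), hfA ⟨p, hp⟩⟩

variable {R : Type*} [CommRing R] [LinearOrder R] [IsStrictOrderedRing R]

theorem one_sub_pow_mul_one_add_mul_le_one {a : R} (ha₀ : 0 ≤ a) (ha₁ : a ≤ 1) (n : ℕ) :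
    (1 - a) ^ n * (1 + n * a) ≤ 1 :=
  calc (1 - a) ^ n * (1 + n * a)
      ≤ (1 - a) ^ n * (1 + a) ^ n :=
        mul_le_mul_of_nonneg_left (one_add_mul_le_pow (by linarith) n)
          (pow_nonneg (sub_nonneg.2 ha₁) n)
    _ = (1 - a ^ 2) ^ n := by rw [← mul_pow]; ring
    _ ≤ 1 := pow_le_one₀ (sub_nonneg.2 (pow_le_one₀ ha₀ ha₁)) (sub_le_self 1 (sq_nonneg a))

theorem min_one_mul_le_two_mul_one_sub_pow {a : R} (ha₀ : 0 ≤ a) (ha₁ : a ≤ 1) (n : ℕ) :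
    min 1 (n * a) ≤ 2 * (1 - (1 - a) ^ n) := by
  have bernoulli := one_sub_pow_mul_one_add_mul_le_one ha₀ ha₁ n
  have na_nonneg : 0 ≤ n * a := by positivity
  rcases le_total 1 (n * a) with h | h
  · rw [min_eq_left h]
    linarith [mul_le_mul_of_nonneg_left h (pow_nonneg (sub_nonneg.2 ha₁) n)]
  · rw [min_eq_right h]
    nlinarith [mul_nonneg na_nonneg (sub_nonneg.2 h)]

end Preliminaries

section TestBoxes

variable {ι : Type*} [DecidableEq ι]

/-- The upper corner of the test box `[0,t)` whose side length is `b` in the coordinates belonging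
to `J` and `1` in all others. -/
def boxCorner (b : ℝ) (J : Finset ι) : ι → ℝ :=
  J.piecewise (fun _ => b) fun _ => 1

theorem boxCorner_mem_Icc {b : ℝ} (hb : b ∈ Set.Icc (0 : ℝ) 1) (J : Finset ι) (j : ι) :
    boxCorner b J j ∈ Set.Icc (0 : ℝ) 1 := by
  by_cases hj : j ∈ J <;> simp [boxCorner, hj, hb.1, hb.2]

theorem prod_boxCorner [Fintype ι] (b : ℝ) (J : Finset ι) : ∏ j, boxCorner b J j = b ^ #J := by
  simp [boxCorner, prod_piecewise]

variable {N s : ℕ} {x : Fin N → Fin s → ℝ}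

/-- The indices of the points of `x` that lie outside the box with upper corner `boxCorner b J`,
provided `x` lies in `[0,1)^s`; only the coordinates in `J` are tested. -/
noncomputable def missedPoints (x : Fin N → Fin s → ℝ) (b : ℝ) (J : Finset (Fin s)) :
    Finset (Fin N) :=
  J.biUnion fun j => {n | b ≤ x n j}

theorem exists_missedPoints_eq_univ_card_le (x : Fin N → Fin s → ℝ) (b : ℝ) :
    ∃ J, missedPoints x b J = missedPoints x b univ ∧ #J ≤ #(missedPoints x b univ) := by
  obtain ⟨J, -, hJ⟩ := exists_subset_biUnion_eq_card_le univ
    fun j => ({n | b ≤ x n j} : Finset (Fin N))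
  exact ⟨J, hJ⟩

theorem filter_lt_boxCorner (hx : ∀ n j, x n j < 1) (b : ℝ) (J : Finset (Fin s)) :
    ({n | ∀ j, x n j < boxCorner b J j} : Finset (Fin N)) = (missedPoints x b J)ᶜ := by
  have lt_boxCorner_iff (n : Fin N) (j : Fin s) :
      x n j < boxCorner b J j ↔ (j ∈ J → x n j < b) := by
    by_cases hj : j ∈ J <;> simp [boxCorner, hj, hx]
  ext n
  simp [missedPoints, lt_boxCorner_iff]

theorem localDisc_boxCorner (hN : N ≠ 0) (hx : ∀ n j, x n j < 1) (b : ℝ) (J : Finset (Fin s)) :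
    localDisc x (boxCorner b J) = 1 - b ^ #J - #(missedPoints x b J) / N := by
  have card_le : #(missedPoints x b J) ≤ N := by simpa using card_le_univ (missedPoints x b J)
  rw [localDisc, filter_lt_boxCorner hx, prod_boxCorner, card_compl, Fintype.card_fin,
    Nat.cast_sub card_le]
  field_simp
  ring

end TestBoxes

section StarDiscrepancy

variable {N s : ℕ} {x : Fin N → Fin s → ℝ}

theorem abs_localDisc_le_one (x : Fin N → Fin s → ℝ) {t : Fin s → ℝ}
    (ht : ∀ j, t j ∈ Set.Icc (0 : ℝ) 1) : |localDisc x t| ≤ 1 := by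
  have card_le : #{n | ∀ j, x n j < t j} ≤ N := by
    simpa using card_le_univ ({n | ∀ j, x n j < t j} : Finset (Fin N))
  exact abs_sub_le_of_nonneg_of_le (by positivity)
    (div_le_one_of_le₀ (by exact_mod_cast card_le) N.cast_nonneg)
    (prod_nonneg fun j _ => (ht j).1) (prod_le_one (fun j _ => (ht j).1) fun j _ => (ht j).2)

theorem abs_localDisc_le_starDisc (x : Fin N → Fin s → ℝ) {t : Fin s → ℝ}
    (ht : ∀ j, t j ∈ Set.Icc (0 : ℝ) 1) : |localDisc x t| ≤ starDisc x := by
  refine le_csSup ⟨1, ?_⟩ ⟨t, ht, rfl⟩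
  rintro _ ⟨t', ht', rfl⟩
  exact abs_localDisc_le_one x ht'

theorem one_sub_pow_le_three_mul_starDisc (hN : N ≠ 0) (hx : ∀ n j, x n j < 1) :
    1 - (1 - 1 / (2 * N) : ℝ) ^ s ≤ 3 * starDisc x := by
  set b : ℝ := 1 - 1 / (2 * N) with hb
  have hb_mem : b ∈ Set.Icc (0 : ℝ) 1 :=
    ⟨sub_nonneg.2 (by exact_mod_cast (one_div _).trans_le (Nat.cast_inv_le_one (2 * N))),
      sub_le_self 1 (by positivity)⟩
  have abs_disc_le (J : Finset (Fin s)) :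
      |1 - b ^ #J - #(missedPoints x b J) / N| ≤ starDisc x :=
    localDisc_boxCorner hN hx b J ▸ abs_localDisc_le_starDisc x (boxCorner_mem_Icc hb_mem J)
  obtain ⟨J, missed_eq, card_J_le⟩ := exists_missedPoints_eq_univ_card_le x b
  have disc_J := (abs_le.1 (abs_disc_le J)).1
  have disc_univ := (abs_le.1 (abs_disc_le univ)).2
  rw [missed_eq] at disc_J
  rw [card_univ, Fintype.card_fin] at disc_univ
  set u : ℝ := #(missedPoints x b univ) / N with hu
  have volume_J_ge : 1 - u / 2 ≤ b ^ #J :=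
    calc 1 - u / 2 = 1 - #(missedPoints x b univ) * (1 / (2 * N) : ℝ) := by rw [hu]; ring
      _ ≤ 1 - #J * (1 / (2 * N) : ℝ) := by gcongr
      _ = 1 + #J * (b - 1) := by rw [hb]; ring
      _ ≤ b ^ #J := one_add_mul_sub_le_pow (by linarith [hb_mem.1]) _
  have u_le : u ≤ 2 * starDisc x := by linarith
  calc 1 - b ^ s ≤ starDisc x + u := by linarith
    _ ≤ 3 * starDisc x := by linarith [u_le]

theorem min_le_starDisc (hN : N ≠ 0) (hx : ∀ n j, x n j < 1) :
    min (1 / 6) (1 / 12 * (s : ℝ) / N) ≤ starDisc x := by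
  have side_gap_le_one : 1 / (2 * N : ℝ) ≤ 1 := by
    exact_mod_cast (one_div _).trans_le (Nat.cast_inv_le_one (2 * N))
  calc min (1 / 6) (1 / 12 * (s : ℝ) / N)
      = 1 / 6 * min 1 (s * (1 / (2 * N) : ℝ)) := by
        rw [mul_min_of_nonneg _ _ (by norm_num)]
        congr 1 <;> ring
    _ ≤ 1 / 6 * (2 * (1 - (1 - 1 / (2 * N)) ^ s)) := by
        gcongr
        exact min_one_mul_le_two_mul_one_sub_pow (by positivity) side_gap_le_one s
    _ ≤ starDisc x := by linarith [one_sub_pow_le_three_mul_starDisc hN hx]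

end StarDiscrepancy

/-- `disc(N,s) ≥ min(ε₀, c s/N)` for constants `c, ε₀ > 0`. -/
theorem minDisc_lower_bound :
    ∃ c ε₀ : ℝ, 0 < c ∧ 0 < ε₀ ∧ ∀ N s : ℕ, 1 ≤ N → 1 ≤ s →
      min ε₀ (c * (s : ℝ) / N) ≤ minDisc N s := by
  refine ⟨1 / 12, 1 / 6, by norm_num, by norm_num, fun N s hN _ => ?_⟩
  refine le_csInf ⟨_, fun _ _ => 0, by simp, rfl⟩ ?_
  rintro _ ⟨x, hx, rfl⟩
  exact min_le_starDisc (Nat.one_le_iff_ne_zero.1 hN) fun n j => (hx n j).2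
end

section
/- Let f : [0,1] → ℝ be absolutely continuous with derivative f′ (i.e., f(x) = f(0) + ∫₀ˣ f′(t) dt for all x ∈ [0,1], with f′ integrable on [0,1]), and let x_0, …, x_{N−1} ∈ [0,1]. Then |∫₀¹ f(x) dx − (1/N)∑_{n=0}^{N−1} f(x_n)| ≤ (∫₀¹ |f′(t)| dt) · sup_{0 ≤ t ≤ 1} |(1/N)·#{n ∈ {0,…,N−1} : x_n ≤ t} − t|. -/
open Finset MeasureTheory

/-!
For a finite measure `μ` carried by `[a, b]`, integrating `f x = f b - ∫ t in x..b, f' t` against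
`μ` and exchanging the integrals gives
`∫ x, f x ∂μ = μ [a, b] • f b - ∫ t in a..b, μ (-∞, t] • f' t`.
When two measures of equal mass are subtracted the boundary terms cancel, and the difference of
their distribution functions is all that is left to bound. Koksma's inequality is the case of
Lebesgue measure on `[0, 1]` and of the measure putting mass `1 / N` at each `x n`.
-/

section Fubini

variable {α E : Type*} [NormedAddCommGroup E] [PartialOrder α] [TopologicalSpace α]
  [OrderClosedTopology α] [MeasurableSpace α] [OpensMeasurableSpace α] {μ ν : Measure α} {g : α → E}

theorem integral_indicator_Ici_apply [NormedSpace ℝ E] [CompleteSpace E] (t : α) :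
    ∫ x, (Set.Ici x).indicator g t ∂μ = μ.real (Set.Iic t) • g t :=
  integral_indicator_const (g t) measurableSet_Iic

variable [SecondCountableTopology α] [IsFiniteMeasure μ] [SFinite ν]

theorem integrable_prod_indicator_Ici (hg : Integrable g ν) :
    Integrable (Function.uncurry fun x t ↦ (Set.Ici x).indicator g t) (μ.prod ν) := by
  have hle : MeasurableSet {p : α × α | p.1 ≤ p.2} := measurableSet_le'
  exact (hg.comp_snd μ).indicator hle

variable [NormedSpace ℝ E]

theorem integrable_integral_indicator_Ici (hg : Integrable g ν) :
    Integrable (fun x ↦ ∫ t, (Set.Ici x).indicator g t ∂ν) μ :=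
  (integrable_prod_indicator_Ici hg).integral_prod_left

theorem integrable_measureReal_Iic_smul [CompleteSpace E] (hg : Integrable g ν) :
    Integrable (fun t ↦ μ.real (Set.Iic t) • g t) ν := by
  simpa only [Function.uncurry_apply_pair, integral_indicator_Ici_apply] using
    (integrable_prod_indicator_Ici (μ := μ) hg).integral_prod_right

theorem integral_integral_indicator_Ici [CompleteSpace E] (hg : Integrable g ν) :
    ∫ x, ∫ t, (Set.Ici x).indicator g t ∂ν ∂μ = ∫ t, μ.real (Set.Iic t) • g t ∂ν := by
  rw [integral_integral_swap (integrable_prod_indicator_Ici hg)]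
  simp only [integral_indicator_Ici_apply]

end Fubini

section IntegrationByParts

variable {E : Type*} [NormedAddCommGroup E] [NormedSpace ℝ E] {a b : ℝ} {f f' : ℝ → E}
  {μ ν : Measure ℝ}

theorem setIntegral_Ioc_indicator_Ici {x : ℝ} (hx : x ∈ Set.Icc a b) :
    ∫ t in Set.Ioc a b, (Set.Ici x).indicator f' t = ∫ t in x..b, f' t := by
  have hIoc : Set.Ioc a b ∩ Set.Ioi x = Set.Ioc x b := by
    rw [Set.Ioc_inter_Ioi, sup_eq_right.2 hx.1]
  rw [intervalIntegral.integral_of_le hx.2, setIntegral_indicator measurableSet_Ici, ← hIoc]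
  exact setIntegral_congr_set ((ae_eq_refl _).inter Ioi_ae_eq_Ici.symm)

theorem eq_sub_setIntegral_indicator_Ici (hf' : IntervalIntegrable f' volume a b)
    (hf : ∀ x ∈ Set.Icc a b, f x = f a + ∫ t in a..x, f' t) {x : ℝ} (hx : x ∈ Set.Icc a b) :
    f x = f b - ∫ t in Set.Ioc a b, (Set.Ici x).indicator f' t := by
  have hab : a ≤ b := hx.1.trans hx.2
  have hx' : x ∈ Set.uIcc a b := Set.Icc_subset_uIcc hx
  have hax : IntervalIntegrable f' volume a x :=
    hf'.mono_set (Set.uIcc_subset_uIcc_left hx')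
  have hxb : IntervalIntegrable f' volume x b :=
    hf'.mono_set (Set.uIcc_subset_uIcc_right hx')
  rw [setIntegral_Ioc_indicator_Ici hx, hf x hx, hf b (Set.right_mem_Icc.2 hab),
    ← intervalIntegral.integral_add_adjacent_intervals hax hxb]
  abel

variable [CompleteSpace E] [IsFiniteMeasure μ] [IsFiniteMeasure ν]

theorem integral_eq_sub_integral_measureReal_Iic_smul (hab : a ≤ b)
    (hf' : IntervalIntegrable f' volume a b)
    (hf : ∀ x ∈ Set.Icc a b, f x = f a + ∫ t in a..x, f' t)
    (hμ : ∀ᵐ x ∂μ, x ∈ Set.Icc a b) :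
    ∫ x, f x ∂μ = μ.real Set.univ • f b - ∫ t in a..b, μ.real (Set.Iic t) • f' t := by
  have hint : IntegrableOn f' (Set.Ioc a b) := hf'.1
  calc ∫ x, f x ∂μ
      = ∫ x, (f b - ∫ t in Set.Ioc a b, (Set.Ici x).indicator f' t) ∂μ :=
        integral_congr_ae (hμ.mono fun _ ↦ eq_sub_setIntegral_indicator_Ici hf' hf)
    _ = μ.real Set.univ • f b - ∫ t in Set.Ioc a b, μ.real (Set.Iic t) • f' t := by
        rw [integral_sub (integrable_const _) (integrable_integral_indicator_Ici hint),
          integral_const, integral_integral_indicator_Ici hint]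
    _ = μ.real Set.univ • f b - ∫ t in a..b, μ.real (Set.Iic t) • f' t := by
        rw [intervalIntegral.integral_of_le hab]

theorem norm_integral_sub_integral_le (hab : a ≤ b)
    (hf' : IntervalIntegrable f' volume a b)
    (hf : ∀ x ∈ Set.Icc a b, f x = f a + ∫ t in a..x, f' t)
    (hμ : ∀ᵐ x ∂μ, x ∈ Set.Icc a b) (hν : ∀ᵐ x ∂ν, x ∈ Set.Icc a b)
    (hμν : μ.real Set.univ = ν.real Set.univ) {D : ℝ}
    (hD : ∀ t ∈ Set.Icc a b, |ν.real (Set.Iic t) - μ.real (Set.Iic t)| ≤ D) :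
    ‖(∫ x, f x ∂μ) - ∫ x, f x ∂ν‖ ≤ (∫ t in a..b, ‖f' t‖) * D := by
  have hint (ρ : Measure ℝ) [IsFiniteMeasure ρ] :
      IntervalIntegrable (fun t ↦ ρ.real (Set.Iic t) • f' t) volume a b :=
    ⟨integrable_measureReal_Iic_smul hf'.1, integrable_measureReal_Iic_smul hf'.2⟩
  have hdiff : (∫ x, f x ∂μ) - ∫ x, f x ∂ν =
      ∫ t in a..b, (ν.real (Set.Iic t) - μ.real (Set.Iic t)) • f' t := by
    simp only [sub_smul]
    rw [integral_eq_sub_integral_measureReal_Iic_smul hab hf' hf hμ,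
      integral_eq_sub_integral_measureReal_Iic_smul hab hf' hf hν, hμν,
      sub_sub_sub_cancel_left, intervalIntegral.integral_sub (hint ν) (hint μ)]
  rw [hdiff, ← intervalIntegral.integral_mul_const]
  refine intervalIntegral.norm_integral_le_of_norm_le hab (ae_of_all _ fun t ht ↦ ?_)
    (hf'.norm.mul_const D)
  rw [norm_smul, mul_comm, Real.norm_eq_abs]
  gcongr
  exact hD t (Set.Ioc_subset_Icc_self ht)

end IntegrationByParts

section EmpiricalMeasure

variable {ι α : Type*} [Fintype ι] [MeasurableSpace α]

/-- The empirical measure of a finite family of points: the average of the Dirac masses at the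
points `x i`, counted with multiplicity. It is the zero measure when the family is empty. -/
noncomputable def empiricalMeasure (x : ι → α) : Measure α :=
  (Fintype.card ι : ENNReal)⁻¹ • ∑ i, Measure.dirac (x i)

instance [Nonempty ι] (x : ι → α) : IsProbabilityMeasure (empiricalMeasure x) where
  measure_univ := by
    simp [empiricalMeasure, ENNReal.inv_mul_cancel]

theorem ae_mem_empiricalMeasure {x : ι → α} {s : Set α} (hs : MeasurableSet s)
    (hx : ∀ i, x i ∈ s) : ∀ᵐ y ∂empiricalMeasure x, y ∈ s :=
  Measure.ae_smul_measure (ae_finsetSum_measure_iff.2 fun i _ ↦ (ae_dirac_iff hs).2 (hx i)) _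

theorem integral_empiricalMeasure [MeasurableSingletonClass α] {E : Type*} [NormedAddCommGroup E]
    [NormedSpace ℝ E] [CompleteSpace E] (x : ι → α) (f : α → E) :
    ∫ y, f y ∂empiricalMeasure x = (Fintype.card ι : ℝ)⁻¹ • ∑ i, f (x i) := by
  rw [empiricalMeasure, integral_smul_measure,
    integral_finsetSum_measure fun i _ ↦ integrable_dirac (by finiteness)]
  simp only [integral_dirac, ENNReal.toReal_inv, ENNReal.toReal_natCast]

theorem measureReal_empiricalMeasure {s : Set α} (hs : MeasurableSet s) (x : ι → α)
    [DecidablePred (x · ∈ s)] :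
    (empiricalMeasure x).real s = #{i | x i ∈ s} / Fintype.card ι := by
  simp [empiricalMeasure, Measure.real, hs, Set.indicator_apply, div_eq_inv_mul]

end EmpiricalMeasure

/-- The star-discrepancy of a probability measure on `[0, 1]`: the uniform distance on `[0, 1]`
between its distribution function and that of the uniform distribution. For an empirical measure
it is the star-discrepancy of the underlying points. -/
noncomputable def starDiscrepancy (μ : Measure ℝ) : ℝ :=
  sSup {d : ℝ | ∃ t ∈ Set.Icc (0 : ℝ) 1, d = |μ.real (Set.Iic t) - t|}

theorem abs_measureReal_Iic_sub_le_starDiscrepancy (μ : Measure ℝ) [IsProbabilityMeasure μ]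
    {t : ℝ} (ht : t ∈ Set.Icc (0 : ℝ) 1) :
    |μ.real (Set.Iic t) - t| ≤ starDiscrepancy μ := by
  refine le_csSup ⟨1, ?_⟩ ⟨t, ht, rfl⟩
  rintro _ ⟨s, hs, rfl⟩
  exact abs_sub_le_of_nonneg_of_le measureReal_nonneg measureReal_le_one hs.1 hs.2

theorem measureReal_restrict_Ioc_Iic {a b t : ℝ} (ht : t ∈ Set.Icc a b) :
    (volume.restrict (Set.Ioc a b)).real (Set.Iic t) = t - a := by
  rw [measureReal_restrict_apply measurableSet_Iic, Set.inter_comm, Set.Ioc_inter_Iic,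
    inf_eq_right.2 ht.2, Real.volume_real_Ioc_of_le ht.1]

theorem koksma_one_dimensional_general {E : Type*} [NormedAddCommGroup E] [NormedSpace ℝ E]
    [CompleteSpace E] (f f' : ℝ → E)
    (hf' : IntervalIntegrable f' volume 0 1)
    (hf : ∀ x ∈ Set.Icc (0 : ℝ) 1, f x = f 0 + ∫ t in (0 : ℝ)..x, f' t)
    (μ : Measure ℝ) [IsProbabilityMeasure μ] (hμ : ∀ᵐ x ∂μ, x ∈ Set.Icc (0 : ℝ) 1) :
    ‖(∫ t in (0 : ℝ)..1, f t) - ∫ x, f x ∂μ‖ ≤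
      (∫ t in (0 : ℝ)..1, ‖f' t‖) * starDiscrepancy μ := by
  rw [intervalIntegral.integral_of_le zero_le_one]
  refine norm_integral_sub_integral_le zero_le_one hf' hf ?_ hμ (by simp) fun t ht ↦ ?_
  · exact (ae_restrict_mem measurableSet_Ioc).mono fun _ hx ↦ Set.Ioc_subset_Icc_self hx
  · rw [measureReal_restrict_Ioc_Iic ht, sub_zero]
    exact abs_measureReal_Iic_sub_le_starDiscrepancy μ ht

/-- one-dimensional Koksma inequality. If `f` is absolutely continuous
with derivative `f'` and `x_0, …, x_{N-1} ∈ [0,1]`, then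
`|∫₀¹ f − (1/N) ∑ f(x_n)| ≤ (∫₀¹ |f'|) · D*`, where `D*` is the star-discrepancy
`sup_{t ∈ [0,1]} |#{n : x_n ≤ t}/N − t|`. -/
theorem koksma_one_dimensional (f f' : ℝ → ℝ)
    (hf' : IntervalIntegrable f' volume 0 1)
    (hf : ∀ x ∈ Set.Icc (0:ℝ) 1, f x = f 0 + ∫ t in (0:ℝ)..x, f' t)
    (N : ℕ) (hN : 0 < N) (x : Fin N → ℝ) (hx : ∀ n, x n ∈ Set.Icc (0:ℝ) 1) :
    |(∫ t in (0:ℝ)..1, f t) - (1 / (N : ℝ)) * ∑ n, f (x n)| ≤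
      (∫ t in (0:ℝ)..1, |f' t|) *
        sSup {d : ℝ | ∃ t ∈ Set.Icc (0:ℝ) 1,
          d = |((univ.filter fun n => x n ≤ t).card : ℝ) / N - t|} := by
  have : Nonempty (Fin N) := Fin.pos_iff_nonempty.1 hN
  simpa [starDiscrepancy, integral_empiricalMeasure, measureReal_empiricalMeasure] using
    koksma_one_dimensional_general f f' hf' hf (empiricalMeasure x)
      (ae_mem_empiricalMeasure measurableSet_Icc hx)
end
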